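/- Let α be a transition rate function on [d] in (D-Lip) satisfying (Lin-Erg). Then for every t ≥ 0, μ ∈ S_d and z ∈ [d], the linear functional derivative δm/δm(t, μ, z) of the measure flow exists, and there is a constant k₁ > 0, independent of t, such that |δm/δm(t, μ, z) − δm/δm(t, μ̂, z)| ≤ k₁ |μ − μ̂| for all t ≥ 0, μ, μ̂ ∈ S_d and z ∈ [d]. In particular, together with exponential stability, (Lin-Erg) implies (Erg). -/

import Mathlib

/-!
The proof never solves the linearized equation; it works with difference quotients of the flow and
lets (Lin-Erg) control them.

*Taylor estimate.* A linear functional derivative only gives one-sided derivatives of `F` at `μ`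
in the directions `δ_z - μ`. The homogeneous extension `x ↦ F (x / |x|)` turns these into right
partial derivatives on the orthant. As `δF` is Lipschitz, adding the coordinate increments one at a
time yields the one-sided derivative `∑ ν_z δF(μ, z)` in every direction `ν - μ`, and the mean value
inequality along segments then gives
`|F ν - F μ - ∑ (ν_z - μ_z) δF(μ, z)| ≤ K |ν - μ|²` (`taylor_bound`). Consequently the Kolmogorov
vector field `ν ↦ ν α(ν)` has linearization `L_μ` at `μ` with a quadratic remainder (`l1_rem_le`).

*Exponential stability.* The difference of two trajectories solves the linearized equation with the
quadratic remainder as source. Grönwall and (Lin-Erg) give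
`|m(t;ν) - m(t;μ)| ≤ c₂ e^{-λt} |ν - μ| + C(t) |ν - μ|²`. Subdividing the segment from `μ` to `ν`
into `N` pieces and letting `N → ∞` removes the quadratic term (`flow_stability`).

*Derivative of the flow.* For `u_ε(t, μ) = (m(t; (1-ε)μ + ε δ_z) - m(t;μ)) / ε`, the difference
`u_ε(t, μ) - u_ε'(t, μ')` solves the linearized equation along `m(t;μ)` with a source of size
`O(ε + ε' + |μ - μ'|)` and initial value `μ' - μ`. Hence (Lin-Erg) bounds it by
`A (ε + ε' + |μ - μ'|)` uniformly in time (`dq_sub_bound`). With `μ = μ'` the quotients are Cauchy,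
so the derivative exists; letting `ε = ε' → 0` gives its Lipschitz bound.
-/

open Finset Filter Topology

/-- The simplex of probability vectors on `Fin d`. -/
def simplex (d : ℕ) : Set (Fin d → ℝ) :=
  {μ | (∀ z, 0 ≤ μ z) ∧ ∑ z, μ z = 1}

/-- The ℓ¹ norm on `Fin d → ℝ`. -/
def l1 {d : ℕ} (v : Fin d → ℝ) : ℝ := ∑ z, |v z|

/-- The `z`-th standard basis vector (Dirac measure at `z`). -/
def bvec {d : ℕ} (z : Fin d) : Fin d → ℝ := fun y => if y = z then 1 else 0

/-- Linear functional derivative: `δF/δm (μ, z) = v`. -/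
def HasLFDerivAt {d : ℕ} (F : (Fin d → ℝ) → ℝ) (μ : Fin d → ℝ) (z : Fin d) (v : ℝ) : Prop :=
  Filter.Tendsto (fun ε : ℝ => (F ((1 - ε) • μ + ε • bvec z) - F μ) / ε)
    (nhdsWithin 0 (Set.Ioi 0)) (nhds v)

/-- Directional derivative `D^m_{yz} F (μ) = v`. -/
def HasDmDerivAt {d : ℕ} (F : (Fin d → ℝ) → ℝ) (μ : Fin d → ℝ) (y z : Fin d) (v : ℝ) : Prop :=
  Filter.Tendsto (fun ε : ℝ => (F (μ + ε • (bvec z - bvec y)) - F μ) / ε)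
    (nhdsWithin 0 (Set.Ioi 0)) (nhds v)

/-- `α` is a transition rate function on `[d]`. -/
def IsRate (d : ℕ) (α : (Fin d → ℝ) → Matrix (Fin d) (Fin d) ℝ) : Prop :=
  ContinuousOn α (simplex d) ∧
  (∀ μ ∈ simplex d, ∀ x y, x ≠ y → 0 ≤ α μ x y) ∧
  (∀ μ ∈ simplex d, ∀ x, ∑ y, α μ x y = 0)

/-- `m` is the measure flow solving the nonlinear Kolmogorov equation for `α`. -/
def IsFlow {d : ℕ} (α : (Fin d → ℝ) → Matrix (Fin d) (Fin d) ℝ)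
    (m : ℝ → (Fin d → ℝ) → Fin d → ℝ) : Prop :=
  ∀ μ ∈ simplex d, m 0 μ = μ ∧ (∀ t, 0 ≤ t → m t μ ∈ simplex d) ∧
    ∀ t, 0 ≤ t → HasDerivAt (fun s => m s μ) (Matrix.vecMul (m t μ) (α (m t μ))) t

/-- A real-valued function on the simplex is in (D-Lip) with linear functional derivative `δF`. -/
def DLipR {d : ℕ} (F : (Fin d → ℝ) → ℝ) (δF : (Fin d → ℝ) → Fin d → ℝ) : Prop :=
  (∃ K : ℝ, ∀ μ ∈ simplex d, ∀ ν ∈ simplex d, |F μ - F ν| ≤ K * l1 (μ - ν)) ∧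
  (∀ μ ∈ simplex d, ∀ z, HasLFDerivAt F μ z (δF μ z)) ∧
  (∃ K : ℝ, ∀ μ ∈ simplex d, ∀ ν ∈ simplex d, l1 (δF μ - δF ν) ≤ K * l1 (μ - ν))

/-- The matrix-valued transition rate function is in (D-Lip), componentwise. -/
def DLipRate {d : ℕ} (α : (Fin d → ℝ) → Matrix (Fin d) (Fin d) ℝ)
    (δα : (Fin d → ℝ) → Fin d → Matrix (Fin d) (Fin d) ℝ) : Prop :=
  ∀ x y, DLipR (fun μ => α μ x y) (fun μ z => δα μ z x y)

/-- The ergodicity assumption (Erg) for the flow `m`, with derivative data `δm`. -/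
def Erg {d : ℕ} (m : ℝ → (Fin d → ℝ) → Fin d → ℝ)
    (δm : ℝ → (Fin d → ℝ) → Fin d → Fin d → ℝ) (lam c₁ k₁ : ℝ) : Prop :=
  0 < lam ∧ 0 < c₁ ∧ 0 < k₁ ∧
  (∀ t, 0 ≤ t → ∀ μ ∈ simplex d, ∀ μ' ∈ simplex d,
    l1 (m t μ - m t μ') ≤ c₁ * Real.exp (-lam * t) * l1 (μ - μ')) ∧
  (∀ t, 0 ≤ t → ∀ μ ∈ simplex d, ∀ z x, HasLFDerivAt (fun ν => m t ν x) μ z (δm t μ z x)) ∧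
  (∀ t, 0 ≤ t → ∀ μ ∈ simplex d, ∀ μ' ∈ simplex d, ∀ z,
    l1 (δm t μ z - δm t μ' z) ≤ k₁ * l1 (μ - μ'))

/-- Empirical measure of a configuration of `N` particles. -/
noncomputable def empMeas {d N : ℕ} (x : Fin N → Fin d) : Fin d → ℝ :=
  fun z => (∑ i, if x i = z then (1 : ℝ) else 0) / N

/-- Generator of the `N`-particle Markov chain. -/
noncomputable def genQ {d N : ℕ} (α : (Fin d → ℝ) → Matrix (Fin d) (Fin d) ℝ)
    (F : (Fin N → Fin d) → ℝ) (x : Fin N → Fin d) : ℝ :=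
  ∑ i, ∑ y ∈ Finset.univ.filter (fun y => y ≠ x i),
    α (empMeas x) (x i) y * (F (Function.update x i y) - F x)

/-- `p` is the law of the `N`-particle chain: a curve of probability vectors solving the
forward Kolmogorov equation (in weak form, tested against all functions). -/
def IsLaw {d N : ℕ} (α : (Fin d → ℝ) → Matrix (Fin d) (Fin d) ℝ)
    (p : ℝ → (Fin N → Fin d) → ℝ) : Prop :=
  (∀ t, 0 ≤ t → (∀ x, 0 ≤ p t x) ∧ (∑ x, p t x) = 1) ∧
  (∀ F : (Fin N → Fin d) → ℝ, ∀ t, 0 ≤ t →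
    HasDerivAt (fun s => ∑ x, p s x * F x) (∑ x, p t x * genQ α F x) t)

/-- The linearized Kolmogorov operator `L_η`. -/
def linOp {d : ℕ} (α : (Fin d → ℝ) → Matrix (Fin d) (Fin d) ℝ)
    (δα : (Fin d → ℝ) → Fin d → Matrix (Fin d) (Fin d) ℝ)
    (η q : Fin d → ℝ) : Fin d → ℝ :=
  Matrix.vecMul η (∑ z, q z • δα η z) + Matrix.vecMul q (α η)

/-- The linearized ergodicity assumption (Lin-Erg) with constants `lam`, `c₂`. -/
def LinErg {d : ℕ} (α : (Fin d → ℝ) → Matrix (Fin d) (Fin d) ℝ)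
    (δα : (Fin d → ℝ) → Fin d → Matrix (Fin d) (Fin d) ℝ)
    (m : ℝ → (Fin d → ℝ) → Fin d → ℝ) (lam c₂ : ℝ) : Prop :=
  ∀ μ ∈ simplex d, ∀ q₀ : Fin d → ℝ, (∑ z, q₀ z) = 0 →
    ∀ r : ℝ → Fin d → ℝ, Measurable r → (∃ Cb : ℝ, ∀ t, 0 ≤ t → l1 (r t) ≤ Cb) →
      (∀ t, 0 ≤ t → (∑ z, r t z) = 0) →
      ∀ q : ℝ → Fin d → ℝ, q 0 = q₀ →
        (∀ t, 0 ≤ t → HasDerivAt q (linOp α δα (m t μ) (q t) + r t) t) →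
        ∀ t, 0 ≤ t →
          l1 (q t) ≤ c₂ * (Real.exp (-lam * t) * l1 q₀ +
            ∫ s in (0:ℝ)..t, Real.exp (-lam * (t - s)) * l1 (r s))

/-! ### The ℓ¹ norm and the simplex -/

lemma l1_nonneg {d : ℕ} (v : Fin d → ℝ) : 0 ≤ l1 v :=
  Finset.sum_nonneg fun _ _ => abs_nonneg _

lemma abs_le_l1 {d : ℕ} (v : Fin d → ℝ) (i : Fin d) : |v i| ≤ l1 v :=
  Finset.single_le_sum (f := fun z => |v z|) (fun _ _ => abs_nonneg _) (Finset.mem_univ i)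

lemma l1_add_le {d : ℕ} (v w : Fin d → ℝ) : l1 (v + w) ≤ l1 v + l1 w := by
  unfold l1
  rw [← Finset.sum_add_distrib]
  exact Finset.sum_le_sum fun i _ => abs_add_le _ _

lemma l1_smul {d : ℕ} (c : ℝ) (v : Fin d → ℝ) : l1 (c • v) = |c| * l1 v := by
  simp [l1, abs_mul, Finset.mul_sum]

lemma l1_neg {d : ℕ} (v : Fin d → ℝ) : l1 (-v) = l1 v := by
  simp [l1]

lemma l1_sub_le {d : ℕ} (v w : Fin d → ℝ) : l1 (v - w) ≤ l1 v + l1 w := by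
  rw [sub_eq_add_neg, ← l1_neg w]
  exact l1_add_le _ _

lemma l1_sub_comm {d : ℕ} (v w : Fin d → ℝ) : l1 (v - w) = l1 (w - v) := by
  rw [← l1_neg, neg_sub]

lemma l1_zero {d : ℕ} : l1 (0 : Fin d → ℝ) = 0 := by simp [l1]

lemma continuous_l1 {d : ℕ} : Continuous (l1 : (Fin d → ℝ) → ℝ) := by
  unfold l1
  fun_prop

lemma norm_le_l1 {d : ℕ} (v : Fin d → ℝ) : ‖v‖ ≤ l1 v :=
  (pi_norm_le_iff_of_nonneg (l1_nonneg v)).2 fun i => abs_le_l1 v i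

lemma l1_le_norm {d : ℕ} (v : Fin d → ℝ) : l1 v ≤ d * ‖v‖ := by
  calc l1 v ≤ ∑ _z : Fin d, ‖v‖ := Finset.sum_le_sum fun i _ => norm_le_pi_norm v i
    _ = d * ‖v‖ := by simp

lemma l1_of_nonneg {d : ℕ} {v : Fin d → ℝ} (hv : ∀ z, 0 ≤ v z) : l1 v = ∑ z, v z :=
  Finset.sum_congr rfl fun z _ => abs_of_nonneg (hv z)

lemma l1_simplex {d : ℕ} {μ : Fin d → ℝ} (hμ : μ ∈ simplex d) : l1 μ = 1 := by
  rw [l1_of_nonneg hμ.1, hμ.2]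

lemma l1_sub_simplex_le {d : ℕ} {μ ν : Fin d → ℝ} (hμ : μ ∈ simplex d) (hν : ν ∈ simplex d) :
    l1 (μ - ν) ≤ 2 := by
  have := l1_sub_le μ ν
  rw [l1_simplex hμ, l1_simplex hν] at this
  linarith

lemma sum_bvec {d : ℕ} (z : Fin d) : ∑ y, bvec z y = 1 := by simp [bvec]

lemma bvec_nonneg {d : ℕ} (z y : Fin d) : 0 ≤ bvec z y := by
  unfold bvec
  split_ifs <;> norm_num

lemma bvec_mem {d : ℕ} (z : Fin d) : bvec z ∈ simplex d := ⟨bvec_nonneg z, sum_bvec z⟩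

lemma segment_mem {d : ℕ} {μ ν : Fin d → ℝ} (hμ : μ ∈ simplex d) (hν : ν ∈ simplex d)
    {ε : ℝ} (h0 : 0 ≤ ε) (h1 : ε ≤ 1) : (1 - ε) • μ + ε • ν ∈ simplex d := by
  refine ⟨fun z => ?_, ?_⟩
  · have := hμ.1 z
    have := hν.1 z
    have : 0 ≤ 1 - ε := by linarith
    simp only [Pi.add_apply, Pi.smul_apply, smul_eq_mul]
    positivity
  · simp only [Pi.add_apply, Pi.smul_apply, smul_eq_mul, Finset.sum_add_distrib,
      ← Finset.mul_sum, hμ.2, hν.2]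
    ring

/-! ### Second-order Taylor estimate for (D-Lip) functions -/

/-- Normalization of a nonnegative vector to a probability vector. -/
noncomputable def nrm {d : ℕ} (x : Fin d → ℝ) : Fin d → ℝ := (∑ z, x z)⁻¹ • x

lemma nrm_mem {d : ℕ} {x : Fin d → ℝ} (hx : ∀ z, 0 ≤ x z) (hs : 0 < ∑ z, x z) :
    nrm x ∈ simplex d := by
  refine ⟨fun z => mul_nonneg (inv_nonneg.2 hs.le) (hx z), ?_⟩
  simp only [nrm, Pi.smul_apply, smul_eq_mul, ← Finset.mul_sum]
  exact inv_mul_cancel₀ hs.ne'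

lemma nrm_simplex {d : ℕ} {μ : Fin d → ℝ} (hμ : μ ∈ simplex d) : nrm μ = μ := by
  simp [nrm, hμ.2]

/-- Normalizing a vector of mass at least one at most doubles its distance to a point
of the simplex. -/
lemma l1_nrm_sub_le {d : ℕ} {x μ : Fin d → ℝ} (hx : ∀ z, 0 ≤ x z) (hs : 1 ≤ ∑ z, x z)
    (hμ : μ ∈ simplex d) : ∑ z, x z - 1 ≤ l1 (x - μ) ∧ l1 (nrm x - μ) ≤ 2 * l1 (x - μ) := by
  have h1 : ∑ z, x z - 1 ≤ l1 (x - μ) := by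
    rw [← hμ.2, ← Finset.sum_sub_distrib]
    exact Finset.sum_le_sum fun z _ => le_abs_self _
  refine ⟨h1, ?_⟩
  have h2 : nrm x - μ = ((∑ z, x z)⁻¹ - 1) • x + (x - μ) := by
    unfold nrm
    module
  have hinv : (∑ z, x z)⁻¹ ≤ 1 := inv_le_one_of_one_le₀ hs
  rw [h2]
  refine (l1_add_le _ _).trans ?_
  rw [l1_smul, l1_of_nonneg hx, abs_of_nonpos (by linarith)]
  have : (∑ z, x z)⁻¹ * (∑ z, x z) = 1 := inv_mul_cancel₀ (by linarith)
  nlinarith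

lemma continuousOn_of_lip {d : ℕ} {F : (Fin d → ℝ) → ℝ} {K : ℝ}
    (h : ∀ μ ∈ simplex d, ∀ ν ∈ simplex d, |F μ - F ν| ≤ K * l1 (μ - ν)) :
    ContinuousOn F (simplex d) := by
  intro μ hμ
  rw [ContinuousWithinAt, tendsto_iff_dist_tendsto_zero]
  have h0 : Tendsto (fun ν => K * l1 (ν - μ)) (𝓝[simplex d] μ) (𝓝 0) := by
    have : Continuous fun ν => K * l1 (ν - μ) :=
      continuous_const.mul (continuous_l1.comp (continuous_id.sub continuous_const))
    have h := (this.tendsto μ).mono_left (nhdsWithin_le_nhds (s := simplex d))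
    simpa [l1_zero] using h
  refine squeeze_zero' (Eventually.of_forall fun _ => dist_nonneg) ?_ h0
  filter_upwards [self_mem_nhdsWithin] with ν hν
  rw [Real.dist_eq]
  exact h ν hν μ hμ

lemma hasDerivWithinAt_of_lf {d : ℕ} {F : (Fin d → ℝ) → ℝ} {μ : Fin d → ℝ} {z : Fin d} {v : ℝ}
    (h : HasLFDerivAt F μ z v) :
    HasDerivWithinAt (fun ε : ℝ => F ((1 - ε) • μ + ε • bvec z)) v (Set.Ici 0) 0 := by
  rw [← hasDerivWithinAt_Ioi_iff_Ici, hasDerivWithinAt_iff_tendsto_slope' (by simp)]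
  refine h.congr fun ε => ?_
  simp [slope_def_field]

/-- The homogeneous extension `x ↦ F (x / |x|)` of `F` to the orthant has right partial
derivatives `δF (x / |x|, z) / |x|`. -/
lemma hasDerivWithinAt_ext {d : ℕ} {F : (Fin d → ℝ) → ℝ} {δF : (Fin d → ℝ) → Fin d → ℝ}
    (hF : ∀ μ ∈ simplex d, ∀ z, HasLFDerivAt F μ z (δF μ z))
    {x : Fin d → ℝ} (hx : ∀ z, 0 ≤ x z) (hs : 0 < ∑ z, x z) (z : Fin d) {h₀ : ℝ} (hh : 0 ≤ h₀) :
    HasDerivWithinAt (fun h : ℝ => F (nrm (x + h • bvec z)))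
      (δF (nrm (x + h₀ • bvec z)) z * (∑ y, (x + h₀ • bvec z) y)⁻¹) (Set.Ici h₀) h₀ := by
  set y := x + h₀ • bvec z with hy
  set s := ∑ w, y w with hsd
  have hy0 : ∀ w, 0 ≤ y w := fun w => by
    have := hx w
    have := bvec_nonneg z w
    simp only [hy, Pi.add_apply, Pi.smul_apply, smul_eq_mul]
    positivity
  have hsum : ∀ h : ℝ, ∑ w, (x + h • bvec z) w = ∑ w, x w + h := fun h => by
    simp [Finset.sum_add_distrib, ← Finset.mul_sum, sum_bvec]
  have hs' : s = ∑ w, x w + h₀ := hsum h₀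
  have hs0 : 0 < s := by linarith
  have h1 := hasDerivWithinAt_of_lf (hF _ (nrm_mem hy0 hs0) z)
  have hg : HasDerivWithinAt (fun h : ℝ => (h - h₀) / (s + (h - h₀))) s⁻¹ (Set.Ici h₀) h₀ := by
    have ha : HasDerivAt (fun h : ℝ => h - h₀) 1 h₀ := (hasDerivAt_id h₀).sub_const h₀
    have := ha.div (ha.const_add s) (by simpa using hs0.ne')
    refine (this.congr_deriv ?_).hasDerivWithinAt
    field_simp
    simp [sq]
  have h2 := HasDerivWithinAt.comp h₀ (s := Set.Ici h₀) (s' := Set.Ici 0)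
    (h := fun h : ℝ => (h - h₀) / (s + (h - h₀)))
    (by simpa using h1) hg (fun h hh => by
      have : 0 ≤ h - h₀ := sub_nonneg.2 hh
      simp only [Set.mem_Ici]
      positivity)
  refine h2.congr_of_mem (fun h hh => ?_) (Set.self_mem_Ici)
  have hk : 0 ≤ h - h₀ := sub_nonneg.2 hh
  simp only [Function.comp]
  congr 1
  have e1 : ∑ w, (x + h • bvec z) w = s + (h - h₀) := by rw [hsum, hs']; ring
  have e2 : x + h • bvec z = y + (h - h₀) • bvec z := by rw [hy]; module
  have hpos : s + (h - h₀) ≠ 0 := by positivity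
  rw [nrm, e1, e2, nrm, ← hsd]
  ext w
  simp only [Pi.add_apply, Pi.smul_apply, smul_eq_mul]
  field_simp
  ring

/-- First-order expansion of the homogeneous extension along one coordinate direction, in a
neighbourhood of radius `ρ` of `μ`. -/
lemma ext_step {d : ℕ} {F : (Fin d → ℝ) → ℝ} {δF : (Fin d → ℝ) → Fin d → ℝ} {K₁ K M : ℝ}
    (hL : ∀ μ ∈ simplex d, ∀ ν ∈ simplex d, |F μ - F ν| ≤ K₁ * l1 (μ - ν))
    (hF : ∀ μ ∈ simplex d, ∀ z, HasLFDerivAt F μ z (δF μ z))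
    (hK : 0 ≤ K) (hδ : ∀ μ ∈ simplex d, ∀ ν ∈ simplex d, ∀ z, |δF μ z - δF ν z| ≤ K * l1 (μ - ν))
    (hM : ∀ μ ∈ simplex d, ∀ z, |δF μ z| ≤ M)
    {x μ : Fin d → ℝ} (hx : ∀ z, 0 ≤ x z) (hs : 1 ≤ ∑ z, x z) (hμ : μ ∈ simplex d)
    {h ρ : ℝ} (hh : 0 ≤ h) (hρ : l1 (x - μ) + h ≤ ρ) (z : Fin d) :
    |F (nrm (x + h • bvec z)) - F (nrm x) - h * δF μ z| ≤ (2 * K + M) * ρ * h := by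
  have hpos : ∀ k : ℝ, 0 ≤ k → ∀ w, 0 ≤ (x + k • bvec z) w := fun k hk w => by
    have := hx w
    have := bvec_nonneg z w
    simp only [Pi.add_apply, Pi.smul_apply, smul_eq_mul]
    positivity
  have hsum : ∀ k : ℝ, ∑ w, (x + k • bvec z) w = ∑ w, x w + k := fun k => by
    simp [Finset.sum_add_distrib, ← Finset.mul_sum, sum_bvec]
  have hcont : ContinuousOn (fun k : ℝ => F (nrm (x + k • bvec z)) - k * δF μ z)
      (Set.Icc 0 h) := by
    refine ContinuousOn.sub ?_ (by fun_prop)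
    refine (continuousOn_of_lip hL).comp ?_ (fun k hk => nrm_mem (hpos k hk.1) (by
      rw [hsum]; linarith [hk.1]))
    have hc : ContinuousOn (fun k : ℝ => x + k • bvec z) (Set.Icc 0 h) := by fun_prop
    have hi : ContinuousOn (fun k : ℝ => (∑ w, (x + k • bvec z) w)⁻¹) (Set.Icc 0 h) := by
      simp only [hsum]
      refine ContinuousOn.inv₀ (by fun_prop) fun k hk => ?_
      linarith [hk.1]
    exact hi.smul hc
  have hder : ∀ k ∈ Set.Ico 0 h, HasDerivWithinAt
      (fun k : ℝ => F (nrm (x + k • bvec z)) - k * δF μ z)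
      (δF (nrm (x + k • bvec z)) z * (∑ y, (x + k • bvec z) y)⁻¹ - δF μ z) (Set.Ici k) k := by
    intro k hk
    have h2 := ((hasDerivAt_id k).mul_const (δF μ z)).hasDerivWithinAt (s := Set.Ici k)
    refine ((hasDerivWithinAt_ext hF hx (by linarith) z hk.1).sub h2).congr_deriv ?_
    rw [one_mul]
  have hM0 : 0 ≤ M := (abs_nonneg _).trans (hM μ hμ z)
  have hbd : ∀ k ∈ Set.Ico 0 h,
      ‖δF (nrm (x + k • bvec z)) z * (∑ y, (x + k • bvec z) y)⁻¹ - δF μ z‖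
        ≤ (2 * K + M) * ρ := by
    intro k hk
    set y := x + k • bvec z with hy
    have hs1 : 1 ≤ ∑ w, y w := by rw [hsum]; linarith [hk.1]
    have hy0 := hpos k hk.1
    have hym := nrm_mem hy0 (by linarith)
    obtain ⟨b1, b2⟩ := l1_nrm_sub_le hy0 hs1 hμ
    have hyρ : l1 (y - μ) ≤ ρ := by
      have : y - μ = (x - μ) + k • bvec z := by rw [hy]; module
      rw [this]
      refine (l1_add_le _ _).trans ?_
      rw [l1_smul, l1_simplex (bvec_mem z), abs_of_nonneg hk.1]
      linarith [hk.2]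
    have e : δF (nrm y) z * (∑ w, y w)⁻¹ - δF μ z
        = (δF (nrm y) z - δF μ z) + δF (nrm y) z * ((∑ w, y w)⁻¹ - 1) := by ring
    have hinv : (∑ w, y w)⁻¹ ≤ 1 := inv_le_one_of_one_le₀ hs1
    have hinv2 : 1 - (∑ w, y w)⁻¹ ≤ ρ := by
      have : (∑ w, y w)⁻¹ * (∑ w, y w) = 1 := inv_mul_cancel₀ (by linarith)
      have : 0 ≤ (∑ w, y w)⁻¹ := by positivity
      nlinarith
    rw [e, Real.norm_eq_abs]
    refine (abs_add_le _ _).trans ?_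
    rw [abs_mul, abs_of_nonpos (a := (∑ w, y w)⁻¹ - 1) (by linarith)]
    have c1 := hδ _ hym _ hμ z
    have c2 : K * l1 (nrm y - μ) ≤ K * (2 * ρ) := by gcongr; linarith
    have c3 : |δF (nrm y) z| * -((∑ w, y w)⁻¹ - 1) ≤ M * ρ := by
      gcongr
      · linarith
      · exact hM _ hym z
      · linarith
    linarith
  have := norm_image_sub_le_of_norm_deriv_right_le_segment hcont hder hbd h ⟨hh, le_rfl⟩
  simp only [zero_smul, add_zero, zero_mul, sub_zero, Real.norm_eq_abs] at this
  convert this using 2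
  ring

/-- Adding the coordinate increments one at a time gives the first-order expansion of the
homogeneous extension in every nonnegative direction `v`. -/
lemma ext_expansion {d : ℕ} {F : (Fin d → ℝ) → ℝ} {δF : (Fin d → ℝ) → Fin d → ℝ} {K₁ K M : ℝ}
    (hL : ∀ μ ∈ simplex d, ∀ ν ∈ simplex d, |F μ - F ν| ≤ K₁ * l1 (μ - ν))
    (hF : ∀ μ ∈ simplex d, ∀ z, HasLFDerivAt F μ z (δF μ z))
    (hK : 0 ≤ K) (hδ : ∀ μ ∈ simplex d, ∀ ν ∈ simplex d, ∀ z, |δF μ z - δF ν z| ≤ K * l1 (μ - ν))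
    (hM : ∀ μ ∈ simplex d, ∀ z, |δF μ z| ≤ M)
    {μ v : Fin d → ℝ} (hμ : μ ∈ simplex d) (hv : ∀ z, 0 ≤ v z) :
    |F (nrm (μ + v)) - F μ - ∑ z, v z * δF μ z| ≤ (2 * K + M) * (∑ z, v z) * ∑ z, v z := by
  have key : ∀ S : Finset (Fin d),
      |F (nrm (μ + ∑ z ∈ S, v z • bvec z)) - F μ - ∑ z ∈ S, v z * δF μ z|
        ≤ (2 * K + M) * (∑ z, v z) * ∑ z ∈ S, v z := by
    intro S
    induction S using Finset.induction_on with
    | empty => simp [nrm_simplex hμ]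
    | insert a S ha ih =>
      have hvS : ∀ w, 0 ≤ (∑ z ∈ S, v z • bvec z) w := fun w => by
        rw [Finset.sum_apply]
        exact Finset.sum_nonneg fun z _ => mul_nonneg (hv z) (bvec_nonneg z w)
      have hsS : ∑ w, (∑ z ∈ S, v z • bvec z) w = ∑ z ∈ S, v z := by
        simp_rw [Finset.sum_apply]
        rw [Finset.sum_comm]
        simp [← Finset.mul_sum, sum_bvec]
      have hS0 : 0 ≤ ∑ z ∈ S, v z := Finset.sum_nonneg fun z _ => hv z
      have hle : ∑ z ∈ insert a S, v z ≤ ∑ z, v z :=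
        Finset.sum_le_sum_of_subset_of_nonneg (Finset.subset_univ _) fun z _ _ => hv z
      rw [Finset.sum_insert ha] at hle
      have st := ext_step hL hF hK hδ hM (x := μ + ∑ z ∈ S, v z • bvec z) (μ := μ) (h := v a)
        (ρ := ∑ z, v z) (fun w => add_nonneg (hμ.1 w) (hvS w))
        (by simp only [Pi.add_apply, Finset.sum_add_distrib]; rw [hsS, hμ.2]; linarith) hμ (hv a)
        (by rw [add_sub_cancel_left, l1_of_nonneg hvS, hsS]; linarith) a
      rw [Finset.sum_insert ha, Finset.sum_insert ha, Finset.sum_insert ha]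
      have e : μ + (v a • bvec a + ∑ z ∈ S, v z • bvec z)
          = μ + ∑ z ∈ S, v z • bvec z + v a • bvec a := by abel
      rw [e]
      rw [abs_le] at *
      constructor <;> nlinarith
  have hv' : v = ∑ z, v z • bvec z := by
    ext w
    simp [Finset.sum_apply, bvec]
  have := key Finset.univ
  rwa [← hv'] at this

/-- The right derivative of `F` at `μ` along `h ↦ (μ + h ν) / (1 + h)`. -/
lemma hasDerivWithinAt_dir {d : ℕ} {F : (Fin d → ℝ) → ℝ} {δF : (Fin d → ℝ) → Fin d → ℝ}
    {K₁ K M : ℝ}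
    (hL : ∀ μ ∈ simplex d, ∀ ν ∈ simplex d, |F μ - F ν| ≤ K₁ * l1 (μ - ν))
    (hF : ∀ μ ∈ simplex d, ∀ z, HasLFDerivAt F μ z (δF μ z))
    (hK : 0 ≤ K) (hδ : ∀ μ ∈ simplex d, ∀ ν ∈ simplex d, ∀ z, |δF μ z - δF ν z| ≤ K * l1 (μ - ν))
    (hM : ∀ μ ∈ simplex d, ∀ z, |δF μ z| ≤ M)
    {μ ν : Fin d → ℝ} (hμ : μ ∈ simplex d) (hν : ν ∈ simplex d) :
    HasDerivWithinAt (fun h : ℝ => F (nrm (μ + h • ν))) (∑ z, ν z * δF μ z) (Set.Ici 0) 0 := by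
  rw [hasDerivWithinAt_iff_isLittleO]
  have hO : (fun h : ℝ => F (nrm (μ + h • ν)) - F (nrm (μ + (0:ℝ) • ν))
      - (h - 0) • ∑ z, ν z * δF μ z) =O[𝓝[Set.Ici 0] 0] fun h : ℝ => h ^ 2 := by
    refine Asymptotics.IsBigO.of_bound (2 * K + M) ?_
    filter_upwards [self_mem_nhdsWithin] with h hh
    have := ext_expansion hL hF hK hδ hM hμ (v := h • ν)
      (fun z => mul_nonneg hh (hν.1 z))
    simp only [Pi.smul_apply, smul_eq_mul, ← Finset.mul_sum, hν.2, mul_assoc] at this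
    simp only [zero_smul, add_zero, nrm_simplex hμ, sub_zero, smul_eq_mul, Real.norm_eq_abs,
      abs_pow, sq_abs]
    refine this.trans_eq ?_
    ring
  refine hO.trans_isLittleO ?_
  have : (fun h : ℝ => h ^ 2) =o[𝓝 0] fun h : ℝ => h := by
    simpa using Asymptotics.isLittleO_pow_id (𝕜 := ℝ) (n := 2) (by norm_num)
  simpa using this.mono nhdsWithin_le_nhds

/-- The derivative in the direction `μ - μ = 0` vanishes. -/
lemma sum_mul_lf_eq_zero {d : ℕ} {F : (Fin d → ℝ) → ℝ} {δF : (Fin d → ℝ) → Fin d → ℝ}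
    {K₁ K M : ℝ}
    (hL : ∀ μ ∈ simplex d, ∀ ν ∈ simplex d, |F μ - F ν| ≤ K₁ * l1 (μ - ν))
    (hF : ∀ μ ∈ simplex d, ∀ z, HasLFDerivAt F μ z (δF μ z))
    (hK : 0 ≤ K) (hδ : ∀ μ ∈ simplex d, ∀ ν ∈ simplex d, ∀ z, |δF μ z - δF ν z| ≤ K * l1 (μ - ν))
    (hM : ∀ μ ∈ simplex d, ∀ z, |δF μ z| ≤ M)
    {μ : Fin d → ℝ} (hμ : μ ∈ simplex d) : ∑ z, μ z * δF μ z = 0 := by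
  have h1 := hasDerivWithinAt_dir hL hF hK hδ hM hμ hμ
  have h2 : HasDerivWithinAt (fun h : ℝ => F (nrm (μ + h • μ))) 0 (Set.Ici 0) 0 := by
    refine (hasDerivWithinAt_const (0:ℝ) (Set.Ici 0) (F μ)).congr_of_mem (fun h hh => ?_)
      Set.self_mem_Ici
    have hh' : (0:ℝ) ≤ h := hh
    have : nrm (μ + h • μ) = μ := by
      have e : ∑ z, (μ + h • μ) z = 1 + h := by
        simp [Finset.sum_add_distrib, ← Finset.mul_sum, hμ.2]
      rw [nrm, e]
      ext w
      simp only [Pi.add_apply, Pi.smul_apply, smul_eq_mul]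
      field_simp
    simp only [this]
  exact (uniqueDiffOn_Ici (0:ℝ) 0 Set.self_mem_Ici).eq_deriv _ h1 h2

/-- Second-order Taylor estimate on the simplex for functions in (D-Lip). -/
lemma taylor_bound {d : ℕ} {F : (Fin d → ℝ) → ℝ} {δF : (Fin d → ℝ) → Fin d → ℝ} {K₁ K M : ℝ}
    (hL : ∀ μ ∈ simplex d, ∀ ν ∈ simplex d, |F μ - F ν| ≤ K₁ * l1 (μ - ν))
    (hF : ∀ μ ∈ simplex d, ∀ z, HasLFDerivAt F μ z (δF μ z))
    (hK : 0 ≤ K) (hδ : ∀ μ ∈ simplex d, ∀ ν ∈ simplex d, ∀ z, |δF μ z - δF ν z| ≤ K * l1 (μ - ν))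
    (hM : ∀ μ ∈ simplex d, ∀ z, |δF μ z| ≤ M)
    {μ ν : Fin d → ℝ} (hμ : μ ∈ simplex d) (hν : ν ∈ simplex d) :
    |F ν - F μ - ∑ z, (ν z - μ z) * δF μ z| ≤ K * l1 (ν - μ) ^ 2 := by
  set D := ∑ z, (ν z - μ z) * δF μ z with hD
  let γ : ℝ → Fin d → ℝ := fun s => (1 - s) • μ + s • ν
  have hγ : ∀ s ∈ Set.Icc (0:ℝ) 1, γ s ∈ simplex d := fun s hs => segment_mem hμ hν hs.1 hs.2
  have hγc : Continuous γ := by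
    change Continuous fun s : ℝ => (1 - s) • μ + s • ν
    fun_prop
  have hcont : ContinuousOn (fun s => F (γ s) - s * D) (Set.Icc 0 1) :=
    ((continuousOn_of_lip hL).comp hγc.continuousOn hγ).sub (by fun_prop)
  have hder : ∀ s ∈ Set.Ico (0:ℝ) 1, HasDerivWithinAt (fun s => F (γ s) - s * D)
      (∑ z, (ν z - μ z) * δF (γ s) z - D) (Set.Ici s) s := by
    intro s hs
    have hs1 : 0 < 1 - s := by linarith [hs.2]
    have hγs := hγ s ⟨hs.1, hs.2.le⟩
    have h1 := hasDerivWithinAt_dir hL hF hK hδ hM hγs hν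
    have hz := sum_mul_lf_eq_zero hL hF hK hδ hM hγs
    -- `γ s' = nrm (γ s + h • ν)` for `h = (s' - s) / (1 - s')`
    have hg : HasDerivWithinAt (fun s' : ℝ => (s' - s) / (1 - s')) (1 - s)⁻¹ (Set.Ico s 1) s := by
      have ha : HasDerivAt (fun s' : ℝ => s' - s) 1 s := (hasDerivAt_id s).sub_const s
      have := ha.div ((hasDerivAt_id s).const_sub 1) hs1.ne'
      refine (this.congr_deriv ?_).hasDerivWithinAt
      simp only [id]
      field_simp
      simp
    have h2 := HasDerivWithinAt.comp s (s := Set.Ico s 1) (s' := Set.Ici 0)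
      (h := fun s' : ℝ => (s' - s) / (1 - s')) (by simpa using h1) hg (fun s' hs' => by
        have : 0 ≤ s' - s := sub_nonneg.2 hs'.1
        have : 0 < 1 - s' := sub_pos.2 hs'.2
        simp only [Set.mem_Ici]
        positivity)
    have h3 : HasDerivWithinAt (fun s' => F (γ s')) ((∑ z, ν z * δF (γ s) z) * (1 - s)⁻¹)
        (Set.Ico s 1) s := by
      refine h2.congr_of_mem (fun s' hs' => ?_) ⟨le_rfl, hs.2⟩
      have hp : 0 < 1 - s' := sub_pos.2 hs'.2
      simp only [Function.comp]
      congr 1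
      have e : ∑ z, (γ s + ((s' - s) / (1 - s')) • ν) z = (1 - s) / (1 - s') := by
        simp only [Pi.add_apply, Pi.smul_apply, smul_eq_mul, Finset.sum_add_distrib,
          ← Finset.mul_sum, hν.2, hγs.2]
        field_simp
        ring
      rw [nrm, e]
      ext w
      simp only [γ, Pi.add_apply, Pi.smul_apply, smul_eq_mul]
      field_simp
      ring
    have h4 := h3.mono_of_mem_nhdsWithin (s := Set.Ici s) (Ico_mem_nhdsGE hs.2)
    have h5 := ((hasDerivAt_id s).mul_const D).hasDerivWithinAt (s := Set.Ici s)
    refine (h4.sub h5).congr_deriv ?_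
    have e : ∑ z, (ν z - μ z) * δF (γ s) z
        = (1 - s)⁻¹ * (∑ z, ν z * δF (γ s) z - ∑ z, γ s z * δF (γ s) z) := by
      rw [← Finset.sum_sub_distrib, Finset.mul_sum]
      refine Finset.sum_congr rfl fun z _ => ?_
      simp only [γ, Pi.add_apply, Pi.smul_apply, smul_eq_mul]
      field_simp
      ring
    rw [e, hz]
    ring
  have hbd : ∀ s ∈ Set.Ico (0:ℝ) 1, ‖∑ z, (ν z - μ z) * δF (γ s) z - D‖
      ≤ K * l1 (ν - μ) ^ 2 := by
    intro s hs
    have hγs := hγ s ⟨hs.1, hs.2.le⟩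
    have hdist : l1 (γ s - μ) ≤ l1 (ν - μ) := by
      have : γ s - μ = s • (ν - μ) := by simp only [γ]; module
      rw [this, l1_smul, abs_of_nonneg hs.1]
      nlinarith [l1_nonneg (ν - μ), hs.2]
    rw [hD, ← Finset.sum_sub_distrib, Real.norm_eq_abs]
    refine (Finset.abs_sum_le_sum_abs _ _).trans ?_
    calc ∑ z, |(ν z - μ z) * δF (γ s) z - (ν z - μ z) * δF μ z|
        ≤ ∑ z, |(ν - μ) z| * (K * l1 (ν - μ)) := by
          refine Finset.sum_le_sum fun z _ => ?_
          rw [← mul_sub, abs_mul]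
          refine mul_le_mul_of_nonneg_left ?_ (abs_nonneg _)
          exact (hδ _ hγs _ hμ z).trans (mul_le_mul_of_nonneg_left hdist hK)
      _ = K * l1 (ν - μ) ^ 2 := by
          rw [← Finset.sum_mul]
          change l1 (ν - μ) * _ = _
          ring
  have := norm_image_sub_le_of_norm_deriv_right_le_segment hcont hder hbd 1 ⟨zero_le_one, le_rfl⟩
  simp only [γ, sub_self, zero_smul, one_smul, zero_add, sub_zero, add_zero, one_mul, zero_mul,
    mul_one, Real.norm_eq_abs] at this
  convert this using 2
  ring

/-! ### Uniform bounds for the rate function and the linearized operator -/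

/-- `K` is a common constant for the sup bounds, the Lipschitz bounds and the second-order Taylor
bound of `F` and its linear functional derivative `δF` on the simplex. -/
structure ScalarBounds {d : ℕ} (F : (Fin d → ℝ) → ℝ) (δF : (Fin d → ℝ) → Fin d → ℝ)
    (K : ℝ) : Prop where
  bdd : ∀ μ ∈ simplex d, |F μ| ≤ K
  lip : ∀ μ ∈ simplex d, ∀ ν ∈ simplex d, |F μ - F ν| ≤ K * l1 (μ - ν)
  dbdd : ∀ μ ∈ simplex d, ∀ z, |δF μ z| ≤ K
  dlip : ∀ μ ∈ simplex d, ∀ ν ∈ simplex d, ∀ z, |δF μ z - δF ν z| ≤ K * l1 (μ - ν)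
  taylor : ∀ μ ∈ simplex d, ∀ ν ∈ simplex d,
    |F ν - F μ - ∑ z, (ν z - μ z) * δF μ z| ≤ K * l1 (ν - μ) ^ 2

lemma ScalarBounds.mono {d : ℕ} {F : (Fin d → ℝ) → ℝ} {δF : (Fin d → ℝ) → Fin d → ℝ}
    {K K' : ℝ} (h : ScalarBounds F δF K) (hK : K ≤ K') : ScalarBounds F δF K' where
  bdd μ hμ := (h.bdd μ hμ).trans hK
  lip μ hμ ν hν := (h.lip μ hμ ν hν).trans (mul_le_mul_of_nonneg_right hK (l1_nonneg _))
  dbdd μ hμ z := (h.dbdd μ hμ z).trans hK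
  dlip μ hμ ν hν z := (h.dlip μ hμ ν hν z).trans (mul_le_mul_of_nonneg_right hK (l1_nonneg _))
  taylor μ hμ ν hν := (h.taylor μ hμ ν hν).trans (mul_le_mul_of_nonneg_right hK (sq_nonneg _))

lemma exists_scalarBounds {d : ℕ} (hd : 1 < d) {F : (Fin d → ℝ) → ℝ}
    {δF : (Fin d → ℝ) → Fin d → ℝ} (h : DLipR F δF) :
    ∃ K : ℝ, 0 ≤ K ∧ ScalarBounds F δF K := by
  obtain ⟨⟨K₁, h1⟩, h2, ⟨K₂, h3⟩⟩ := h
  have hb : bvec (⟨0, by omega⟩ : Fin d) ∈ simplex d := bvec_mem _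
  set b := bvec (⟨0, by omega⟩ : Fin d) with hbd
  have hδ : ∀ μ ∈ simplex d, ∀ ν ∈ simplex d, ∀ z, |δF μ z - δF ν z| ≤ |K₂| * l1 (μ - ν) :=
    fun μ hμ ν hν z => (abs_le_l1 (δF μ - δF ν) z).trans ((h3 μ hμ ν hν).trans
      (mul_le_mul_of_nonneg_right (le_abs_self _) (l1_nonneg _)))
  have hL : ∀ μ ∈ simplex d, ∀ ν ∈ simplex d, |F μ - F ν| ≤ |K₁| * l1 (μ - ν) :=
    fun μ hμ ν hν => (h1 μ hμ ν hν).trans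
      (mul_le_mul_of_nonneg_right (le_abs_self _) (l1_nonneg _))
  have hM : ∀ μ ∈ simplex d, ∀ z, |δF μ z| ≤ l1 (δF b) + 2 * |K₂| := by
    intro μ hμ z
    have e1 := hδ μ hμ b hb z
    have e2 := abs_le_l1 (δF b) z
    have e3 := abs_sub_abs_le_abs_sub (δF μ z) (δF b z)
    nlinarith [l1_sub_simplex_le hμ hb, abs_nonneg K₂]
  have hB : ∀ μ ∈ simplex d, |F μ| ≤ |F b| + 2 * |K₁| := by
    intro μ hμ
    have e1 := hL μ hμ b hb
    have e3 := abs_sub_abs_le_abs_sub (F μ) (F b)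
    nlinarith [l1_sub_simplex_le hμ hb, abs_nonneg K₁]
  have p1 := abs_nonneg K₁
  have p2 := abs_nonneg K₂
  have p3 := abs_nonneg (F b)
  have p4 := l1_nonneg (δF b)
  refine ⟨|F b| + 2 * |K₁| + (l1 (δF b) + 2 * |K₂|), by positivity, ?_, ?_, ?_, ?_, ?_⟩
  · exact fun μ hμ => (hB μ hμ).trans (by linarith)
  · exact fun μ hμ ν hν => (hL μ hμ ν hν).trans
      (mul_le_mul_of_nonneg_right (by linarith) (l1_nonneg _))
  · exact fun μ hμ z => (hM μ hμ z).trans (by linarith)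
  · exact fun μ hμ ν hν z => (hδ μ hμ ν hν z).trans
      (mul_le_mul_of_nonneg_right (by linarith) (l1_nonneg _))
  · exact fun μ hμ ν hν => (taylor_bound h1 h2 p2 hδ hM hμ hν).trans
      (mul_le_mul_of_nonneg_right (by linarith) (sq_nonneg _))

lemma exists_rateBounds {d : ℕ} (hd : 1 < d) {α : (Fin d → ℝ) → Matrix (Fin d) (Fin d) ℝ}
    {δα : (Fin d → ℝ) → Fin d → Matrix (Fin d) (Fin d) ℝ} (h : DLipRate α δα) :
    ∃ K : ℝ, 0 ≤ K ∧ ∀ x y, ScalarBounds (fun μ => α μ x y) (fun μ z => δα μ z x y) K := by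
  choose K hK0 hK using fun x y => exists_scalarBounds hd (h x y)
  refine ⟨∑ x, ∑ y, K x y, Finset.sum_nonneg fun x _ => Finset.sum_nonneg fun y _ => hK0 x y,
    fun x y => (hK x y).mono ?_⟩
  calc K x y ≤ ∑ y, K x y :=
        Finset.single_le_sum (f := fun y => K x y) (fun y _ => hK0 x y) (Finset.mem_univ y)
    _ ≤ ∑ x, ∑ y, K x y :=
        Finset.single_le_sum (f := fun x => ∑ y, K x y)
          (fun x _ => Finset.sum_nonneg fun y _ => hK0 x y) (Finset.mem_univ x)

/-- The rows of `δα` sum to zero because those of `α` do along the whole simplex. -/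
lemma sum_lf_rate {d : ℕ} {α : (Fin d → ℝ) → Matrix (Fin d) (Fin d) ℝ}
    {δα : (Fin d → ℝ) → Fin d → Matrix (Fin d) (Fin d) ℝ} (hα : IsRate d α)
    (h : DLipRate α δα) {μ : Fin d → ℝ} (hμ : μ ∈ simplex d) (z x : Fin d) :
    ∑ y, δα μ z x y = 0 := by
  have h1 := tendsto_finsetSum (Finset.univ : Finset (Fin d))
    (fun y _ => (h x y).2.1 μ hμ z)
  refine tendsto_nhds_unique h1 ?_
  refine (tendsto_const_nhds (x := (0:ℝ))).congr' ?_
  have : Set.Ioo (0:ℝ) 1 ∈ 𝓝[>] (0:ℝ) := Ioo_mem_nhdsGT one_pos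
  filter_upwards [this] with ε hε
  rw [← Finset.sum_div, Finset.sum_sub_distrib, hα.2.2 μ hμ,
    hα.2.2 _ (segment_mem hμ (bvec_mem z) hε.1.le hε.2.le)]
  simp

lemma l1_vecMul_le {d : ℕ} (q : Fin d → ℝ) {A : Matrix (Fin d) (Fin d) ℝ} {B : ℝ}
    (hA : ∀ x y, |A x y| ≤ B) : l1 (Matrix.vecMul q A) ≤ d * B * l1 q := by
  calc l1 (Matrix.vecMul q A) = ∑ y, |∑ x, q x * A x y| := rfl
    _ ≤ ∑ _y : Fin d, ∑ x, |q x| * B := by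
        refine Finset.sum_le_sum fun y _ => (Finset.abs_sum_le_sum_abs _ _).trans
          (Finset.sum_le_sum fun x _ => ?_)
        rw [abs_mul]
        exact mul_le_mul_of_nonneg_left (hA x y) (abs_nonneg _)
    _ = d * B * l1 q := by
        rw [← Finset.sum_mul]
        simp [l1]
        ring

lemma sum_vecMul_eq_zero {d : ℕ} (q : Fin d → ℝ) {A : Matrix (Fin d) (Fin d) ℝ}
    (hA : ∀ x, ∑ y, A x y = 0) : ∑ y, Matrix.vecMul q A y = 0 := by
  change ∑ y, ∑ x, q x * A x y = 0
  rw [Finset.sum_comm]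
  simp [← Finset.mul_sum, hA]

lemma abs_sum_smul_le {d : ℕ} (q : Fin d → ℝ) {D : Fin d → Matrix (Fin d) (Fin d) ℝ} {B : ℝ}
    (hD : ∀ z x y, |D z x y| ≤ B) (x y : Fin d) : |(∑ z, q z • D z) x y| ≤ B * l1 q := by
  rw [Matrix.sum_apply]
  refine (Finset.abs_sum_le_sum_abs _ _).trans ?_
  rw [l1, Finset.mul_sum]
  refine Finset.sum_le_sum fun z _ => ?_
  rw [Matrix.smul_apply, smul_eq_mul, abs_mul, mul_comm]
  exact mul_le_mul_of_nonneg_right (hD z x y) (abs_nonneg _)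

/-- The remainder in the linearization at `μ` of the Kolmogorov vector field `ν ↦ ν α(ν)`. -/
def rem {d : ℕ} (α : (Fin d → ℝ) → Matrix (Fin d) (Fin d) ℝ)
    (δα : (Fin d → ℝ) → Fin d → Matrix (Fin d) (Fin d) ℝ) (μ ν : Fin d → ℝ) : Fin d → ℝ :=
  Matrix.vecMul ν (α ν) - Matrix.vecMul μ (α μ) - linOp α δα μ (ν - μ)

section Bounds

variable {d : ℕ} {α : (Fin d → ℝ) → Matrix (Fin d) (Fin d) ℝ}
  {δα : (Fin d → ℝ) → Fin d → Matrix (Fin d) (Fin d) ℝ} {K : ℝ}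

lemma linOp_add (η p q : Fin d → ℝ) :
    linOp α δα η (p + q) = linOp α δα η p + linOp α δα η q := by
  simp only [linOp, Pi.add_apply, add_smul, Finset.sum_add_distrib, Matrix.vecMul_add,
    Matrix.add_vecMul]
  abel

lemma linOp_smul (η : Fin d → ℝ) (c : ℝ) (q : Fin d → ℝ) :
    linOp α δα η (c • q) = c • linOp α δα η q := by
  simp only [linOp, Pi.smul_apply, smul_eq_mul, mul_smul, ← Finset.smul_sum, Matrix.vecMul_smul,
    Matrix.smul_vecMul, smul_add]

lemma linOp_sub (η p q : Fin d → ℝ) :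
    linOp α δα η (p - q) = linOp α δα η p - linOp α δα η q := by
  have := linOp_add (α := α) (δα := δα) η p ((-1 : ℝ) • q)
  rw [linOp_smul] at this
  simpa [sub_eq_add_neg] using this

lemma sum_linOp (hα : IsRate d α) (h : DLipRate α δα) {η : Fin d → ℝ} (hη : η ∈ simplex d)
    (q : Fin d → ℝ) : ∑ y, linOp α δα η q y = 0 := by
  simp only [linOp, Pi.add_apply, Finset.sum_add_distrib]
  rw [sum_vecMul_eq_zero q (hα.2.2 η hη), sum_vecMul_eq_zero, add_zero]
  intro x
  simp_rw [Matrix.sum_apply, Matrix.smul_apply]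
  rw [Finset.sum_comm]
  simp [← Finset.mul_sum, sum_lf_rate hα h hη]

lemma sum_rem (hα : IsRate d α) (h : DLipRate α δα) {μ ν : Fin d → ℝ} (hμ : μ ∈ simplex d)
    (hν : ν ∈ simplex d) : ∑ y, rem α δα μ ν y = 0 := by
  simp only [rem, Pi.sub_apply, Finset.sum_sub_distrib]
  rw [sum_vecMul_eq_zero _ (hα.2.2 μ hμ), sum_vecMul_eq_zero _ (hα.2.2 ν hν),
    sum_linOp hα h hμ]
  simp

lemma l1_rem_le (hK : 0 ≤ K)
    (hb : ∀ x y, ScalarBounds (fun μ => α μ x y) (fun μ z => δα μ z x y) K)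
    {μ ν : Fin d → ℝ} (hμ : μ ∈ simplex d) (hν : ν ∈ simplex d) :
    l1 (rem α δα μ ν) ≤ 3 * d * K * l1 (ν - μ) ^ 2 := by
  have e : rem α δα μ ν = Matrix.vecMul (ν - μ) (α ν - α μ)
      + Matrix.vecMul μ (α ν - α μ - ∑ z, (ν - μ) z • δα μ z) := by
    simp only [rem, linOp, Matrix.vecMul_sub, Matrix.sub_vecMul]
    abel
  rw [e]
  refine (l1_add_le _ _).trans ?_
  have h1 := l1_vecMul_le (ν - μ) (A := α ν - α μ) (fun x y => (hb x y).lip ν hν μ hμ)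
  have h2 := l1_vecMul_le μ (A := α ν - α μ - ∑ z, (ν - μ) z • δα μ z)
    (B := K * l1 (ν - μ) ^ 2) (fun x y => by
      have := (hb x y).taylor μ hμ ν hν
      simpa [Matrix.sum_apply] using this)
  rw [l1_simplex hμ] at h2
  have : 0 ≤ d * K * l1 (ν - μ) ^ 2 := by positivity
  nlinarith

lemma l1_linOp_sub_le
    (hb : ∀ x y, ScalarBounds (fun μ => α μ x y) (fun μ z => δα μ z x y) K)
    {η η' : Fin d → ℝ} (hη : η ∈ simplex d) (hη' : η' ∈ simplex d) (q : Fin d → ℝ) :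
    l1 (linOp α δα η q - linOp α δα η' q) ≤ 3 * d * K * l1 (η - η') * l1 q := by
  have e : linOp α δα η q - linOp α δα η' q
      = Matrix.vecMul η (∑ z, q z • (δα η z - δα η' z))
        + Matrix.vecMul (η - η') (∑ z, q z • δα η' z) + Matrix.vecMul q (α η - α η') := by
    simp only [linOp, Matrix.vecMul_sub, Matrix.sub_vecMul, smul_sub, Finset.sum_sub_distrib]
    abel
  have h1 := l1_vecMul_le η (abs_sum_smul_le q (D := fun z => δα η z - δα η' z)
    (fun z x y => (hb x y).dlip η hη η' hη' z))
  have h2 := l1_vecMul_le (η - η') (abs_sum_smul_le q (D := fun z => δα η' z)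
    (fun z x y => (hb x y).dbdd η' hη' z))
  have h3 := l1_vecMul_le q (A := α η - α η') (fun x y => (hb x y).lip η hη η' hη')
  rw [l1_simplex hη] at h1
  rw [e]
  have := l1_add_le (Matrix.vecMul η (∑ z, q z • (δα η z - δα η' z))
        + Matrix.vecMul (η - η') (∑ z, q z • δα η' z)) (Matrix.vecMul q (α η - α η'))
  have := l1_add_le (Matrix.vecMul η (∑ z, q z • (δα η z - δα η' z)))
        (Matrix.vecMul (η - η') (∑ z, q z • δα η' z))
  nlinarith

lemma l1_field_sub_le
    (hb : ∀ x y, ScalarBounds (fun μ => α μ x y) (fun μ z => δα μ z x y) K)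
    {μ ν : Fin d → ℝ} (hμ : μ ∈ simplex d) (hν : ν ∈ simplex d) :
    l1 (Matrix.vecMul ν (α ν) - Matrix.vecMul μ (α μ)) ≤ 2 * d * K * l1 (ν - μ) := by
  have e : Matrix.vecMul ν (α ν) - Matrix.vecMul μ (α μ)
      = Matrix.vecMul ν (α ν - α μ) + Matrix.vecMul (ν - μ) (α μ) := by
    simp only [Matrix.vecMul_sub, Matrix.sub_vecMul]
    abel
  rw [e]
  refine (l1_add_le _ _).trans ?_
  have h1 := l1_vecMul_le ν (A := α ν - α μ) (fun x y => (hb x y).lip ν hν μ hμ)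
  have h2 := l1_vecMul_le (ν - μ) (A := α μ) (fun x y => (hb x y).bdd μ hμ)
  rw [l1_simplex hν] at h1
  linarith

/-- Continuity of `t ↦ L_{η(t)} q(t)` along continuous curves. -/
lemma continuousOn_linOp
    (hb : ∀ x y, ScalarBounds (fun μ => α μ x y) (fun μ z => δα μ z x y) K)
    {s : Set ℝ} {η q : ℝ → Fin d → ℝ} (hη : ContinuousOn η s) (hηs : ∀ t ∈ s, η t ∈ simplex d)
    (hq : ContinuousOn q s) : ContinuousOn (fun t => linOp α δα (η t) (q t)) s := by
  have ha : ∀ x y, ContinuousOn (fun t => α (η t) x y) s := fun x y =>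
    (continuousOn_of_lip (hb x y).lip).comp hη hηs
  have hda : ∀ z x y, ContinuousOn (fun t => δα (η t) z x y) s := fun z x y =>
    (continuousOn_of_lip (F := fun μ => δα μ z x y)
      (fun μ hμ ν hν => (hb x y).dlip μ hμ ν hν z)).comp hη hηs
  have hη' := continuousOn_pi.1 hη
  have hq' := continuousOn_pi.1 hq
  refine continuousOn_pi.2 fun y => ?_
  have e : (fun t => linOp α δα (η t) (q t) y)
      = fun t => ∑ x, η t x * ∑ z, q t z * δα (η t) z x y + ∑ x, q t x * α (η t) x y := by
    ext t
    simp [linOp, Matrix.vecMul, dotProduct, Matrix.sum_apply]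
  rw [e]
  refine ContinuousOn.add ?_ ?_
  · exact continuousOn_finsetSum _ fun x _ => (hη' x).mul
      (continuousOn_finsetSum _ fun z _ => (hq' z).mul (hda z x y))
  · exact continuousOn_finsetSum _ fun x _ => (hq' x).mul (ha x y)

lemma continuousOn_field
    (hb : ∀ x y, ScalarBounds (fun μ => α μ x y) (fun μ z => δα μ z x y) K)
    {s : Set ℝ} {η : ℝ → Fin d → ℝ} (hη : ContinuousOn η s) (hηs : ∀ t ∈ s, η t ∈ simplex d) :
    ContinuousOn (fun t => Matrix.vecMul (η t) (α (η t))) s := by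
  have ha : ∀ x y, ContinuousOn (fun t => α (η t) x y) s := fun x y =>
    (continuousOn_of_lip (hb x y).lip).comp hη hηs
  have hη' := continuousOn_pi.1 hη
  refine continuousOn_pi.2 fun y => ?_
  change ContinuousOn (fun t => ∑ x, η t x * α (η t) x y) s
  exact continuousOn_finsetSum _ fun x _ => (hη' x).mul (ha x y)

lemma continuousOn_rem
    (hb : ∀ x y, ScalarBounds (fun μ => α μ x y) (fun μ z => δα μ z x y) K)
    {s : Set ℝ} {η ζ : ℝ → Fin d → ℝ} (hη : ContinuousOn η s) (hηs : ∀ t ∈ s, η t ∈ simplex d)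
    (hζ : ContinuousOn ζ s) (hζs : ∀ t ∈ s, ζ t ∈ simplex d) :
    ContinuousOn (fun t => rem α δα (η t) (ζ t)) s :=
  ((continuousOn_field hb hζ hζs).sub (continuousOn_field hb hη hηs)).sub
    (continuousOn_linOp hb hη hηs (hζ.sub hη))

end Bounds

/-! ### Consequences of (Lin-Erg) for the flow -/

section Flow

variable {d : ℕ} {α : (Fin d → ℝ) → Matrix (Fin d) (Fin d) ℝ}
  {δα : (Fin d → ℝ) → Fin d → Matrix (Fin d) (Fin d) ℝ} {K : ℝ}
  {m : ℝ → (Fin d → ℝ) → Fin d → ℝ} {lam c₂ : ℝ}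

/-- (Lin-Erg) for a source term that is continuous and bounded on `[0, ∞)`; only its bound `B` on
`[0, T]` enters the estimate at time `T`. -/
lemma linErg_bound (hlam : 0 < lam) (hc₂ : 0 ≤ c₂) (hLE : LinErg α δα m lam c₂)
    {μ : Fin d → ℝ} (hμ : μ ∈ simplex d) {p r : ℝ → Fin d → ℝ}
    (hp : ∀ t, 0 ≤ t → HasDerivAt p (linOp α δα (m t μ) (p t) + r t) t)
    (hp0 : ∑ z, p 0 z = 0) (hr : ContinuousOn r (Set.Ici 0))
    (hr0 : ∀ t, 0 ≤ t → ∑ z, r t z = 0) {Cb : ℝ} (hCb : ∀ t, 0 ≤ t → l1 (r t) ≤ Cb)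
    {T B : ℝ} (hT : 0 ≤ T) (hB : ∀ s ∈ Set.Icc 0 T, l1 (r s) ≤ B) :
    l1 (p T) ≤ c₂ * (Real.exp (-lam * T) * l1 (p 0) + B / lam) := by
  -- (Lin-Erg) asks for measurability on all of `ℝ`, so `r` is frozen at negative times
  set r' : ℝ → Fin d → ℝ := fun t => r (max t 0) with hr'
  have hr'c : Continuous r' :=
    hr.comp_continuous (by fun_prop) (fun t => le_max_right t 0)
  have hr'e : ∀ t, 0 ≤ t → r' t = r t := fun t ht => by simp only [hr', max_eq_left ht]
  have h := hLE μ hμ (p 0) hp0 r' hr'c.measurable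
    ⟨Cb, fun t ht => by rw [hr'e t ht]; exact hCb t ht⟩
    (fun t ht => by rw [hr'e t ht]; exact hr0 t ht) p rfl
    (fun t ht => by rw [hr'e t ht]; exact hp t ht) T hT
  refine h.trans (mul_le_mul_of_nonneg_left (add_le_add le_rfl ?_) hc₂)
  have hB0 : 0 ≤ B := (l1_nonneg _).trans (hB 0 ⟨le_rfl, hT⟩)
  have hder : ∀ s ∈ Set.uIcc 0 T, HasDerivAt (fun s => Real.exp (-lam * (T - s)) * (B / lam))
      (Real.exp (-lam * (T - s)) * B) s := by
    intro s _
    have h1 : HasDerivAt (fun s => -lam * (T - s)) lam s := by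
      simpa using ((hasDerivAt_id s).const_sub T).const_mul (-lam)
    refine (h1.exp.mul_const (B / lam)).congr_deriv ?_
    field_simp
  calc ∫ s in (0:ℝ)..T, Real.exp (-lam * (T - s)) * l1 (r' s)
      ≤ ∫ s in (0:ℝ)..T, Real.exp (-lam * (T - s)) * B := by
        refine intervalIntegral.integral_mono_on hT ?_ ?_ fun s hs => ?_
        · refine Continuous.intervalIntegrable ?_ _ _
          have := continuous_l1.comp hr'c
          exact Continuous.mul (by fun_prop) this
        · exact Continuous.intervalIntegrable (by fun_prop) _ _
        · rw [hr'e s hs.1]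
          exact mul_le_mul_of_nonneg_left (hB s hs) (Real.exp_pos _).le
    _ = B / lam - Real.exp (-lam * T) * (B / lam) := by
        rw [intervalIntegral.integral_eq_sub_of_hasDerivAt hder
          (Continuous.intervalIntegrable (by fun_prop) _ _)]
        simp
    _ ≤ B / lam := by
        have : 0 ≤ Real.exp (-lam * T) * (B / lam) := by positivity
        linarith

lemma IsFlow.continuousOn (hm : IsFlow α m) {μ : Fin d → ℝ} (hμ : μ ∈ simplex d) :
    ContinuousOn (fun t => m t μ) (Set.Ici 0) := fun t ht =>
  ((hm μ hμ).2.2 t ht).continuousAt.continuousWithinAt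

/-- The difference of two trajectories solves the linearized equation with source `rem`. -/
lemma hasDerivAt_flow_sub (hm : IsFlow α m) {μ ν : Fin d → ℝ} (hμ : μ ∈ simplex d)
    (hν : ν ∈ simplex d) {t : ℝ} (ht : 0 ≤ t) :
    HasDerivAt (fun s => m s ν - m s μ)
      (linOp α δα (m t μ) (m t ν - m t μ) + rem α δα (m t μ) (m t ν)) t := by
  refine (((hm ν hν).2.2 t ht).sub ((hm μ hμ).2.2 t ht)).congr_deriv ?_
  simp only [rem]
  abel

/-- Grönwall's inequality for the flow. -/
lemma flow_gronwall (hK : 0 ≤ K)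
    (hb : ∀ x y, ScalarBounds (fun μ => α μ x y) (fun μ z => δα μ z x y) K)
    (hm : IsFlow α m) {μ ν : Fin d → ℝ} (hμ : μ ∈ simplex d) (hν : ν ∈ simplex d)
    {t : ℝ} (ht : 0 ≤ t) :
    l1 (m t ν - m t μ) ≤ d * Real.exp (2 * d * K * d * t) * l1 (ν - μ) := by
  have hK' : 0 ≤ 2 * d * K * d := by positivity
  have hlip : ∀ s ∈ Set.Ico 0 t, LipschitzOnWith ⟨2 * d * K * d, hK'⟩
      (fun η : Fin d → ℝ => Matrix.vecMul η (α η)) (simplex d) := fun s _ => by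
    refine LipschitzOnWith.of_dist_le_mul fun η hη ζ hζ => ?_
    rw [dist_eq_norm, dist_eq_norm]
    calc ‖Matrix.vecMul η (α η) - Matrix.vecMul ζ (α ζ)‖
        ≤ l1 (Matrix.vecMul η (α η) - Matrix.vecMul ζ (α ζ)) := norm_le_l1 _
      _ ≤ 2 * d * K * l1 (η - ζ) := l1_field_sub_le hb hζ hη
      _ ≤ 2 * d * K * (d * ‖η - ζ‖) :=
          mul_le_mul_of_nonneg_left (l1_le_norm _) (by positivity)
      _ = 2 * d * K * d * ‖η - ζ‖ := by ring
  have hc : ∀ η ∈ simplex d, ContinuousOn (fun s => m s η) (Set.Icc 0 t) := fun η hη =>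
    (hm.continuousOn hη).mono fun s hs => hs.1
  have h := dist_le_of_trajectories_ODE_of_mem (v := fun _ η => Matrix.vecMul η (α η))
    (s := fun _ => simplex d) hlip (hc ν hν)
    (fun s hs => ((hm ν hν).2.2 s hs.1).hasDerivWithinAt) (fun s hs => (hm ν hν).2.1 s hs.1)
    (hc μ hμ) (fun s hs => ((hm μ hμ).2.2 s hs.1).hasDerivWithinAt)
    (fun s hs => (hm μ hμ).2.1 s hs.1) (δ := l1 (ν - μ))
    (by rw [(hm ν hν).1, (hm μ hμ).1, dist_eq_norm]; exact norm_le_l1 _) t ⟨ht, le_rfl⟩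
  rw [dist_eq_norm, sub_zero] at h
  calc l1 (m t ν - m t μ) ≤ d * ‖m t ν - m t μ‖ := l1_le_norm _
    _ ≤ d * (l1 (ν - μ) * Real.exp (2 * d * K * d * t)) :=
        mul_le_mul_of_nonneg_left h (by positivity)
    _ = _ := by ring

/-- Exponential stability up to a quadratic error with a time-dependent constant. -/
lemma flow_stability_quadratic (hα : IsRate d α) (hαD : DLipRate α δα) (hK : 0 ≤ K)
    (hb : ∀ x y, ScalarBounds (fun μ => α μ x y) (fun μ z => δα μ z x y) K)
    (hm : IsFlow α m) (hlam : 0 < lam) (hc₂ : 0 ≤ c₂) (hLE : LinErg α δα m lam c₂)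
    {T : ℝ} (hT : 0 ≤ T) :
    ∃ C : ℝ, ∀ μ ∈ simplex d, ∀ ν ∈ simplex d,
      l1 (m T ν - m T μ) ≤ c₂ * Real.exp (-lam * T) * l1 (ν - μ) + C * l1 (ν - μ) ^ 2 := by
  set E := d * Real.exp (2 * d * K * d * T) with hE
  refine ⟨c₂ * (3 * d * K * E ^ 2 / lam), fun μ hμ ν hν => ?_⟩
  have hmμ := (hm μ hμ).2.1
  have hmν := (hm ν hν).2.1
  have h := linErg_bound hlam hc₂ hLE hμ (p := fun s => m s ν - m s μ)
    (r := fun s => rem α δα (m s μ) (m s ν)) (Cb := 3 * d * K * 2 ^ 2)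
    (B := 3 * d * K * (E * l1 (ν - μ)) ^ 2)
    (fun t ht => hasDerivAt_flow_sub hm hμ hν ht)
    (by simp [(hm ν hν).1, (hm μ hμ).1, hμ.2, hν.2])
    (continuousOn_rem hb (hm.continuousOn hμ) hmμ (hm.continuousOn hν) hmν)
    (fun t ht => sum_rem hα hαD (hmμ t ht) (hmν t ht))
    (fun t ht => (l1_rem_le hK hb (hmμ t ht) (hmν t ht)).trans (by
      have := l1_sub_simplex_le (hmν t ht) (hmμ t ht)
      have := l1_nonneg (m t ν - m t μ)
      gcongr)) hT
    (fun s hs => (l1_rem_le hK hb (hmμ s hs.1) (hmν s hs.1)).trans (by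
      have h1 := flow_gronwall hK hb hm hμ hν hs.1
      have h2 : d * Real.exp (2 * d * K * d * s) * l1 (ν - μ) ≤ E * l1 (ν - μ) := by
        refine mul_le_mul_of_nonneg_right ?_ (l1_nonneg _)
        rw [hE]
        gcongr
        exact hs.2
      have := l1_nonneg (m s ν - m s μ)
      gcongr
      exact h1.trans h2))
  simp only [(hm ν hν).1, (hm μ hμ).1] at h
  refine h.trans_eq ?_
  ring

/-- Exponential stability. Cutting the segment from `μ` to `ν` into `N` pieces divides the total
quadratic error by `N`, so that it disappears in the limit. -/
lemma flow_stability (hα : IsRate d α) (hαD : DLipRate α δα) (hK : 0 ≤ K)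
    (hb : ∀ x y, ScalarBounds (fun μ => α μ x y) (fun μ z => δα μ z x y) K)
    (hm : IsFlow α m) (hlam : 0 < lam) (hc₂ : 0 ≤ c₂) (hLE : LinErg α δα m lam c₂)
    {T : ℝ} (hT : 0 ≤ T) {μ ν : Fin d → ℝ} (hμ : μ ∈ simplex d) (hν : ν ∈ simplex d) :
    l1 (m T ν - m T μ) ≤ c₂ * Real.exp (-lam * T) * l1 (ν - μ) := by
  obtain ⟨C, hC⟩ := flow_stability_quadratic hα hαD hK hb hm hlam hc₂ hLE hT
  set a := c₂ * Real.exp (-lam * T) with ha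
  set L := l1 (ν - μ) with hL
  have hN : ∀ N : ℕ, 1 ≤ N → l1 (m T ν - m T μ) ≤ a * L + C * L ^ 2 * (1 / (N : ℝ)) := by
    intro N hN
    have hN0 : (0:ℝ) < N := by exact_mod_cast hN
    let γ : ℕ → Fin d → ℝ := fun i => (1 - (i:ℝ) / N) • μ + ((i:ℝ) / N) • ν
    have hγ : ∀ i ≤ N, γ i ∈ simplex d := fun i hi =>
      segment_mem hμ hν (by positivity) ((div_le_one hN0).2 (by exact_mod_cast hi))
    have hstep : ∀ i < N, l1 (m T (γ (i + 1)) - m T (γ i)) ≤ a * (L / N) + C * (L / N) ^ 2 := by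
      intro i hi
      have h := hC (γ i) (hγ i hi.le) (γ (i + 1)) (hγ (i + 1) hi)
      have e : γ (i + 1) - γ i = (1 / (N:ℝ)) • (ν - μ) := by
        simp only [γ]
        push_cast
        rw [add_div]
        module
      have e2 : l1 (γ (i + 1) - γ i) = L / N := by
        rw [e, l1_smul, abs_of_pos (by positivity), ← hL]
        ring
      rwa [e2] at h
    have hind : ∀ i ≤ N, l1 (m T (γ i) - m T μ) ≤ i * (a * (L / N) + C * (L / N) ^ 2) := by
      intro i
      induction i with
      | zero =>
        intro _
        have : γ 0 = μ := by simp [γ]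
        simp [this, l1_zero]
      | succ i ih =>
        intro hi
        have h1 := ih (by omega)
        have h2 := hstep i (by omega)
        have e : m T (γ (i + 1)) - m T μ
            = (m T (γ (i + 1)) - m T (γ i)) + (m T (γ i) - m T μ) := by abel
        rw [e]
        refine (l1_add_le _ _).trans ?_
        push_cast
        linarith
    have h := hind N le_rfl
    have e : γ N = ν := by simp [γ, div_self hN0.ne']
    rw [e] at h
    refine h.trans_eq ?_
    field_simp
  have hlim : Tendsto (fun N : ℕ => a * L + C * L ^ 2 * (1 / (N : ℝ))) atTop (𝓝 (a * L)) := by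
    simpa using (tendsto_one_div_atTop_nhds_zero_nat.const_mul (C * L ^ 2)).const_add (a * L)
  refine ge_of_tendsto hlim ?_
  filter_upwards [eventually_ge_atTop 1] with N h
  exact hN N h

/-- The difference quotient whose limit as `ε → 0⁺` is `δm/δm (t, μ, z)`. -/
noncomputable def dq (m : ℝ → (Fin d → ℝ) → Fin d → ℝ) (z : Fin d) (ε t : ℝ) (μ : Fin d → ℝ) :
    Fin d → ℝ :=
  ε⁻¹ • (m t ((1 - ε) • μ + ε • bvec z) - m t μ)

/-- Difference quotients at two base points and two step sizes, compared uniformly in time: their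
difference solves the linearized equation along `m(t; μ)` with a source of order
`ε + ε' + |μ - μ'|`. -/
lemma dq_sub_bound (hα : IsRate d α) (hαD : DLipRate α δα) (hK : 0 ≤ K)
    (hb : ∀ x y, ScalarBounds (fun μ => α μ x y) (fun μ z => δα μ z x y) K)
    (hm : IsFlow α m) (hlam : 0 < lam) (hc₂ : 0 ≤ c₂) (hLE : LinErg α δα m lam c₂) :
    ∃ A : ℝ, 0 ≤ A ∧ ∀ t, 0 ≤ t → ∀ μ ∈ simplex d, ∀ μ' ∈ simplex d, ∀ z, ∀ ε ∈ Set.Ioc (0:ℝ) 1,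
      ∀ ε' ∈ Set.Ioc (0:ℝ) 1,
      l1 (dq m z ε t μ - dq m z ε' t μ') ≤ A * (ε + ε' + l1 (μ - μ')) := by
  have hstab : ∀ t, 0 ≤ t → ∀ μ ∈ simplex d, ∀ ν ∈ simplex d,
      l1 (m t ν - m t μ) ≤ c₂ * l1 (ν - μ) := fun t ht μ hμ ν hν => by
    refine (flow_stability hα hαD hK hb hm hlam hc₂ hLE ht hμ hν).trans ?_
    refine mul_le_mul_of_nonneg_right (mul_le_of_le_one_right hc₂ ?_) (l1_nonneg _)
    rw [Real.exp_le_one_iff]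
    nlinarith
  set C := 3 * d * K with hC
  have hC0 : 0 ≤ C := by positivity
  refine ⟨c₂ * (1 + 4 * C * c₂ ^ 2 / lam), by positivity, ?_⟩
  intro T hT μ hμ μ' hμ' z ε hε ε' hε'
  set Δ := l1 (μ - μ') with hΔ
  have hΔ0 : 0 ≤ Δ := l1_nonneg _
  have hν : ∀ η ∈ simplex d, ∀ e ∈ Set.Ioc (0:ℝ) 1, (1 - e) • η + e • bvec z ∈ simplex d :=
    fun η hη e he => segment_mem hη (bvec_mem z) he.1.le he.2
  -- displacement of the perturbed trajectory
  have hw : ∀ η ∈ simplex d, ∀ e ∈ Set.Ioc (0:ℝ) 1, ∀ t, 0 ≤ t →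
      l1 (m t ((1 - e) • η + e • bvec z) - m t η) ≤ 2 * c₂ * e := by
    intro η hη e he t ht
    refine (hstab t ht η hη _ (hν η hη e he)).trans ?_
    have e1 : (1 - e) • η + e • bvec z - η = e • (bvec z - η) := by module
    rw [e1, l1_smul, abs_of_pos he.1]
    have := l1_sub_simplex_le (bvec_mem z) hη
    have : e * l1 (bvec z - η) ≤ e * 2 := mul_le_mul_of_nonneg_left this he.1.le
    nlinarith
  have hrem : ∀ η ∈ simplex d, ∀ e ∈ Set.Ioc (0:ℝ) 1, ∀ t, 0 ≤ t →
      l1 (e⁻¹ • rem α δα (m t η) (m t ((1 - e) • η + e • bvec z))) ≤ 4 * C * c₂ ^ 2 * e := by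
    intro η hη e he t ht
    rw [l1_smul, abs_of_pos (inv_pos.2 he.1)]
    have h1 := l1_rem_le hK hb ((hm η hη).2.1 t ht) ((hm _ (hν η hη e he)).2.1 t ht)
    have h2 : l1 (m t ((1 - e) • η + e • bvec z) - m t η) ^ 2 ≤ (2 * c₂ * e) ^ 2 :=
      pow_le_pow_left₀ (l1_nonneg _) (hw η hη e he t ht) 2
    calc _ ≤ e⁻¹ * (C * (2 * c₂ * e) ^ 2) := mul_le_mul_of_nonneg_left
          (h1.trans (mul_le_mul_of_nonneg_left h2 hC0)) (inv_pos.2 he.1).le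
      _ = _ := by
          have := he.1.ne'
          field_simp
          ring
  have hdq : ∀ t, 0 ≤ t → l1 (dq m z ε' t μ') ≤ 2 * c₂ := fun t ht => by
    rw [dq, l1_smul, abs_of_pos (inv_pos.2 hε'.1), inv_mul_le_iff₀ hε'.1]
    linarith [hw μ' hμ' ε' hε' t ht]
  set r : ℝ → Fin d → ℝ := fun t =>
    ε⁻¹ • rem α δα (m t μ) (m t ((1 - ε) • μ + ε • bvec z))
      - ε'⁻¹ • rem α δα (m t μ') (m t ((1 - ε') • μ' + ε' • bvec z))
      + (linOp α δα (m t μ) (dq m z ε' t μ') - linOp α δα (m t μ') (dq m z ε' t μ')) with hr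
  have hrB : ∀ t, 0 ≤ t → l1 (r t) ≤ 4 * C * c₂ ^ 2 * (ε + ε' + Δ) := by
    intro t ht
    have h1 := hrem μ hμ ε hε t ht
    have h2 := hrem μ' hμ' ε' hε' t ht
    have h3 := l1_linOp_sub_le hb ((hm μ hμ).2.1 t ht) ((hm μ' hμ').2.1 t ht) (dq m z ε' t μ')
    have h4 : 3 * d * K * l1 (m t μ - m t μ') * l1 (dq m z ε' t μ')
        ≤ C * (c₂ * Δ) * (2 * c₂) := by
      have := hstab t ht μ' hμ' μ hμ
      have := l1_nonneg (m t μ - m t μ')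
      have := hdq t ht
      have := l1_nonneg (dq m z ε' t μ')
      gcongr
    have h5 : 0 ≤ C * c₂ ^ 2 * Δ := by positivity
    refine (l1_add_le _ _).trans ?_
    have h6 := l1_sub_le (ε⁻¹ • rem α δα (m t μ) (m t ((1 - ε) • μ + ε • bvec z)))
      (ε'⁻¹ • rem α δα (m t μ') (m t ((1 - ε') • μ' + ε' • bvec z)))
    nlinarith
  have hp0 : dq m z ε 0 μ - dq m z ε' 0 μ' = μ' - μ := by
    have e1 : ∀ η ∈ simplex d, ∀ e ∈ Set.Ioc (0:ℝ) 1, dq m z e 0 η = bvec z - η := by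
      intro η hη e he
      rw [dq, (hm η hη).1, (hm _ (hν η hη e he)).1]
      have : (1 - e) • η + e • bvec z - η = e • (bvec z - η) := by module
      rw [this, smul_smul, inv_mul_cancel₀ he.1.ne', one_smul]
    rw [e1 μ hμ ε hε, e1 μ' hμ' ε' hε']
    abel
  have hcμ := fun η (hη : η ∈ simplex d) => hm.continuousOn hη
  have h := linErg_bound hlam hc₂ hLE hμ (p := fun t => dq m z ε t μ - dq m z ε' t μ')
    (r := r) (Cb := 4 * C * c₂ ^ 2 * (ε + ε' + Δ)) (B := 4 * C * c₂ ^ 2 * (ε + ε' + Δ))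
    (fun t ht => by
      have h1 := (hasDerivAt_flow_sub (δα := δα) hm hμ (hν μ hμ ε hε) ht).const_smul ε⁻¹
      have h2 := (hasDerivAt_flow_sub (δα := δα) hm hμ' (hν μ' hμ' ε' hε') ht).const_smul ε'⁻¹
      refine (h1.sub h2).congr_deriv ?_
      simp only [hr, dq, linOp_sub, linOp_smul]
      module)
    (by rw [hp0]; simp [hμ.2, hμ'.2])
    (by
      have hdqc : ContinuousOn (fun t => dq m z ε' t μ') (Set.Ici 0) :=
        ContinuousOn.const_smul ((hcμ _ (hν μ' hμ' ε' hε')).sub (hcμ μ' hμ')) ε'⁻¹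
      refine ContinuousOn.add (ContinuousOn.sub ?_ ?_) (ContinuousOn.sub ?_ ?_)
      · exact (continuousOn_rem hb (hcμ _ hμ) (hm μ hμ).2.1 (hcμ _ (hν μ hμ ε hε))
          (hm _ (hν μ hμ ε hε)).2.1).const_smul ε⁻¹
      · exact (continuousOn_rem hb (hcμ _ hμ') (hm μ' hμ').2.1 (hcμ _ (hν μ' hμ' ε' hε'))
          (hm _ (hν μ' hμ' ε' hε')).2.1).const_smul ε'⁻¹
      · exact continuousOn_linOp hb (hcμ _ hμ) (hm μ hμ).2.1 hdqc
      · exact continuousOn_linOp hb (hcμ _ hμ') (hm μ' hμ').2.1 hdqc)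
    (fun t ht => by
      have a1 := (hm μ hμ).2.1 t ht
      have a2 := (hm μ' hμ').2.1 t ht
      simp only [hr, Pi.add_apply, Pi.sub_apply, Pi.smul_apply, smul_eq_mul,
        Finset.sum_add_distrib, Finset.sum_sub_distrib, ← Finset.mul_sum,
        sum_linOp hα hαD a1, sum_linOp hα hαD a2,
        sum_rem hα hαD a1 ((hm _ (hν μ hμ ε hε)).2.1 t ht),
        sum_rem hα hαD a2 ((hm _ (hν μ' hμ' ε' hε')).2.1 t ht)]
      simp)
    hrB hT (fun s hs => hrB s hs.1)
  simp only [hp0] at h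
  rw [l1_sub_comm μ' μ, ← hΔ] at h
  refine h.trans ?_
  rw [mul_assoc c₂]
  refine mul_le_mul_of_nonneg_left ?_ hc₂
  have hexp : Real.exp (-lam * T) ≤ 1 := by
    rw [Real.exp_le_one_iff]
    nlinarith
  have h1 : Real.exp (-lam * T) * Δ ≤ Δ := mul_le_of_le_one_left hΔ0 hexp
  have h2 : 4 * C * c₂ ^ 2 * (ε + ε' + Δ) / lam = 4 * C * c₂ ^ 2 / lam * (ε + ε' + Δ) := by ring
  rw [h2, add_mul, one_mul]
  linarith [hε.1, hε'.1]

end Flow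

/-- Under (Lin-Erg), the linear functional derivative `δm/δm(t,μ,z)` of the
measure flow exists for all `t ≥ 0`, `μ ∈ S_d`, `z ∈ [d]`, and is Lipschitz in `μ` with a
constant `k₁` uniform in `t`; in particular (together with exponential stability) (Lin-Erg)
implies (Erg). -/
theorem linErg_implies_erg {d : ℕ} (hd : 1 < d)
    (α : (Fin d → ℝ) → Matrix (Fin d) (Fin d) ℝ)
    (δα : (Fin d → ℝ) → Fin d → Matrix (Fin d) (Fin d) ℝ)
    (hα : IsRate d α) (hαD : DLipRate α δα)
    (m : ℝ → (Fin d → ℝ) → Fin d → ℝ) (hm : IsFlow α m)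
    (lam c₂ : ℝ) (hlam : 0 < lam) (hc₂ : 0 ≤ c₂)
    (hLE : LinErg α δα m lam c₂) :
    ∃ (δm : ℝ → (Fin d → ℝ) → Fin d → Fin d → ℝ) (k₁ : ℝ), 0 < k₁ ∧
      (∀ t : ℝ, 0 ≤ t → ∀ μ ∈ simplex d, ∀ z x,
        HasLFDerivAt (fun ν => m t ν x) μ z (δm t μ z x)) ∧
      (∀ t : ℝ, 0 ≤ t → ∀ μ ∈ simplex d, ∀ μ' ∈ simplex d, ∀ z,
        l1 (δm t μ z - δm t μ' z) ≤ k₁ * l1 (μ - μ')) ∧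
      (∃ lam' c₁ : ℝ, Erg m δm lam' c₁ k₁) := by
  obtain ⟨K, hK, hb⟩ := exists_rateBounds hd hαD
  obtain ⟨A, hA, hAb⟩ := dq_sub_bound hα hαD hK hb hm hlam hc₂ hLE
  -- the difference quotients are Cauchy as `ε → 0⁺`
  have hex : ∀ (t : ℝ) (μ : Fin d → ℝ) (z : Fin d), 0 ≤ t → μ ∈ simplex d →
      ∃ v : Fin d → ℝ, Tendsto (fun ε => dq m z ε t μ) (𝓝[>] 0) (𝓝 v) := by
    intro t μ z ht hμ
    rw [← cauchy_map_iff_exists_tendsto, Metric.cauchy_iff]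
    refine ⟨inferInstance, fun e he => ?_⟩
    have hδ : 0 < min 1 (e / (2 * (A + 1))) := by positivity
    refine ⟨(fun ε => dq m z ε t μ) '' Set.Ioo 0 (min 1 (e / (2 * (A + 1)))),
      image_mem_map (Ioo_mem_nhdsGT hδ), ?_⟩
    rintro _ ⟨ε, hε, rfl⟩ _ ⟨ε', hε', rfl⟩
    have h1 := hε.2.trans_le (min_le_left _ _)
    have h1' := hε'.2.trans_le (min_le_left _ _)
    have h2 := hε.2.trans_le (min_le_right _ _)
    have h2' := hε'.2.trans_le (min_le_right _ _)
    have h := hAb t ht μ hμ μ hμ z ε ⟨hε.1, h1.le⟩ ε' ⟨hε'.1, h1'.le⟩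
    rw [sub_self, l1_zero, add_zero] at h
    rw [dist_eq_norm]
    rw [lt_div_iff₀ (by positivity)] at h2 h2'
    refine (norm_le_l1 _).trans_lt (h.trans_lt ?_)
    nlinarith [hε.1, hε'.1]
  choose! δm hδm using hex
  have hder : ∀ t : ℝ, 0 ≤ t → ∀ μ ∈ simplex d, ∀ z x,
      HasLFDerivAt (fun ν => m t ν x) μ z (δm t μ z x) := by
    intro t ht μ hμ z x
    refine (tendsto_pi_nhds.1 (hδm t μ z ht hμ) x).congr fun ε => ?_
    simp [dq, div_eq_inv_mul]
  have hlip : ∀ t : ℝ, 0 ≤ t → ∀ μ ∈ simplex d, ∀ μ' ∈ simplex d, ∀ z,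
      l1 (δm t μ z - δm t μ' z) ≤ (A + 1) * l1 (μ - μ') := by
    intro t ht μ hμ μ' hμ' z
    have h1 : Tendsto (fun ε => l1 (dq m z ε t μ - dq m z ε t μ')) (𝓝[>] 0)
        (𝓝 (l1 (δm t μ z - δm t μ' z))) :=
      (continuous_l1.tendsto _).comp ((hδm t μ z ht hμ).sub (hδm t μ' z ht hμ'))
    have h2 : Tendsto (fun ε : ℝ => A * (ε + ε + l1 (μ - μ'))) (𝓝[>] 0)
        (𝓝 (A * l1 (μ - μ'))) := by
      have : Continuous fun ε : ℝ => A * (ε + ε + l1 (μ - μ')) := by fun_prop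
      have := (this.tendsto 0).mono_left (nhdsWithin_le_nhds (s := Set.Ioi 0))
      simpa using this
    have h3 : l1 (δm t μ z - δm t μ' z) ≤ A * l1 (μ - μ') := by
      refine le_of_tendsto_of_tendsto h1 h2 ?_
      filter_upwards [Ioo_mem_nhdsGT (zero_lt_one (α := ℝ))] with ε hε
      exact hAb t ht μ hμ μ' hμ' z ε ⟨hε.1, hε.2.le⟩ ε ⟨hε.1, hε.2.le⟩
    linarith [l1_nonneg (μ - μ')]
  have hA1 : 0 < A + 1 := by linarith
  refine ⟨δm, A + 1, hA1, hder, hlip, lam, c₂ + 1, hlam, by linarith, hA1, ?_, hder, hlip⟩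
  intro t ht μ hμ μ' hμ'
  refine (flow_stability hα hαD hK hb hm hlam hc₂ hLE ht hμ' hμ).trans ?_
  have := l1_nonneg (μ - μ')
  gcongr
  linarith
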